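/- arXiv:1009.3151 — 9 statements merged into one kernel-verified Lean document; each statement's English description precedes it below -/
import Mathlib

section
/- Let H : ℝ^M → ℝ be differentiable and let ∇̄H : ℝ^M × ℝ^M → ℝ^M be a discrete gradient of H, i.e. H(u) − H(v) = ⟨∇̄H(v,u), u − v⟩ for all u, v ∈ ℝ^M. Let S be a skew-symmetric M×M real matrix (Sᵀ = −S), let Δt ∈ ℝ, and suppose y, y' ∈ ℝ^M satisfy y' − y = Δt • S (∇̄H(y, y')). Then H(y') = H(y), i.e. one step of the discrete gradient method exactly conserves H. -/
open Matrix

/-- One step of the discrete gradient method exactly conserves the invariant `H`: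
if `∇̄H` satisfies the discrete gradient identity `H u - H v = ⟨∇̄H(v,u), u - v⟩`,
`S` is skew-symmetric and `y' - y = Δt • S (∇̄H(y,y'))`, then `H y' = H y`. -/
theorem discrete_gradient_method_conserves_invariant
    {M : ℕ} (H : (Fin M → ℝ) → ℝ) (hH : Differentiable ℝ H)
    (DG : (Fin M → ℝ) × (Fin M → ℝ) → (Fin M → ℝ))
    (hDGcont : Continuous DG)
    (hDG : ∀ u v : Fin M → ℝ, H u - H v = DG (v, u) ⬝ᵥ (u - v))
    (S : Matrix (Fin M) (Fin M) ℝ) (hS : Sᵀ = -S)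
    (Δt : ℝ) (y y' : Fin M → ℝ)
    (hstep : y' - y = Δt • S.mulVec (DG (y, y'))) :
    H y' = H y := by
  have key : ∀ x : Fin M → ℝ, x ⬝ᵥ S.mulVec x = 0 := by
    intro x
    have h : x ⬝ᵥ S.mulVec x = -(x ⬝ᵥ S.mulVec x) := by
      calc x ⬝ᵥ S.mulVec x = (Sᵀ.mulVec x) ⬝ᵥ x := by
            rw [Matrix.dotProduct_mulVec, Matrix.mulVec_transpose]
        _ = -(x ⬝ᵥ S.mulVec x) := by
            rw [hS, Matrix.neg_mulVec, neg_dotProduct, dotProduct_comm]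
    linarith
  have h := hDG y' y
  rw [hstep, dotProduct_smul, key, smul_zero] at h
  linarith
end

section
/- Let k ≥ 1 and let H : (ℝ^N)^k → ℝ be continuously differentiable and cyclic, i.e. H(w₁,…,w_k) = H(w₂,…,w_k,w₁) for all arguments. Denote by ∇₁H the gradient of H with respect to its first argument. Then for all w₁, …, w_{k+1} ∈ ℝ^N: H(w₂,…,w_{k+1}) − H(w₁,…,w_k) = ⟨ ∫₀¹ ∇₁H(ξ w_{k+1} + (1−ξ) w₁, w₂, …, w_k) dξ , w_{k+1} − w₁ ⟩. In other words, the polarised AVF discrete variational derivative satisfies the defining discrete-gradient identity for the polarised Hamiltonian. -/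
open RealInnerProductSpace

/-- The polarised AVF discrete variational derivative of a cyclic, continuously
differentiable polarised Hamiltonian `H : (ℝ^N)^k → ℝ` satisfies the defining
discrete-gradient identity:
`H(w₂,…,w_{k+1}) - H(w₁,…,w_k) = ⟨∫₀¹ ∇₁H(ξ w_{k+1} + (1-ξ)w₁, w₂,…,w_k) dξ, w_{k+1} - w₁⟩`. -/
theorem polarised_avf_discrete_gradient_identity
    {N k : ℕ} [NeZero k]
    (H : (Fin k → EuclideanSpace ℝ (Fin N)) → ℝ) (hH : ContDiff ℝ 1 H)
    (hcyc : ∀ w : Fin k → EuclideanSpace ℝ (Fin N), H w = H (fun i => w (i + 1)))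
    (w : Fin (k + 1) → EuclideanSpace ℝ (Fin N)) :
    H (fun i : Fin k => w i.succ) - H (fun i : Fin k => w i.castSucc) =
      ⟪∫ ξ in (0:ℝ)..1,
          gradient (fun x => H (Function.update (fun i : Fin k => w i.castSucc) 0 x))
            (ξ • w (Fin.last k) + (1 - ξ) • w 0),
        w (Fin.last k) - w 0⟫ := by
  set W : Fin k → EuclideanSpace ℝ (Fin N) := fun i => w i.castSucc with hW
  set f : EuclideanSpace ℝ (Fin N) → ℝ := fun x => H (Function.update W 0 x) with hf
  have hfC : ContDiff ℝ 1 f := hH.comp (contDiff_update 1 W 0)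
  have hgc : Continuous (gradient f) := by
    unfold gradient
    exact (LinearIsometryEquiv.continuous _).comp (hfC.continuous_fderiv one_ne_zero)
  have h0 : f (w 0) = H W := by
    have : w 0 = W 0 := by
      simp [hW]
    rw [hf]
    simp only [this, Function.update_eq_self]
  have h1 : f (w (Fin.last k)) = H (fun i : Fin k => w i.succ) := by
    simp only [hf]
    rw [hcyc]
    congr 1
    funext i
    obtain ⟨m, rfl⟩ : ∃ m, k = m + 1 := ⟨k - 1, by have := NeZero.pos k; omega⟩
    refine Fin.lastCases ?_ (fun j => ?_) i
    · have : (Fin.last m + 1 : Fin (m + 1)) = 0 := Fin.last_add_one m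
      rw [this]
      exact Function.update_self _ _ _
    · have h : (j.castSucc + 1 : Fin (m + 1)) = j.succ := Fin.coeSucc_eq_succ
      rw [h]
      rw [Function.update_of_ne (Fin.succ_ne_zero j)]
      simp [hW]
  have hline : Continuous (fun ξ : ℝ => ξ • w (Fin.last k) + (1 - ξ) • w 0) := by fun_prop
  have hGc : Continuous (fun ξ : ℝ => gradient f (ξ • w (Fin.last k) + (1 - ξ) • w 0)) :=
    hgc.comp hline
  have hder : ∀ ξ : ℝ, HasDerivAt (fun ξ : ℝ => f (ξ • w (Fin.last k) + (1 - ξ) • w 0))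
      (⟪w (Fin.last k) - w 0, gradient f (ξ • w (Fin.last k) + (1 - ξ) • w 0)⟫) ξ := by
    intro ξ
    have hl : HasDerivAt (fun ξ : ℝ => ξ • w (Fin.last k) + (1 - ξ) • w 0)
        (w (Fin.last k) - w 0) ξ := by
      have := ((hasDerivAt_id ξ).smul_const (w (Fin.last k))).add
        (((hasDerivAt_id ξ).const_sub 1).smul_const (w 0))
      exact this.congr_deriv (by rw [one_smul, neg_one_smul, sub_eq_add_neg])
    have hg := ((hfC.differentiable one_ne_zero)
      (ξ • w (Fin.last k) + (1 - ξ) • w 0)).hasGradientAt.hasFDerivAt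
    have := hg.comp_hasDerivAt ξ hl
    rw [real_inner_comm]
    exact this
  have key := intervalIntegral.integral_eq_sub_of_hasDerivAt (a := 0) (b := 1)
    (fun ξ _ => hder ξ) ((continuous_const.inner hGc).intervalIntegrable 0 1)
  simp only [one_smul, zero_smul, sub_self, sub_zero, add_zero, zero_add] at key
  rw [← h1, ← h0, ← key, real_inner_comm]
  exact ((innerSL ℝ (w (Fin.last k) - w 0)).intervalIntegral_comp_comm
    (hGc.intervalIntegrable 0 1))
end

section
/- Let k ≥ 1, let H : (ℝ^N)^k → ℝ, and let δ̄H : (ℝ^N)^{k+1} → ℝ^N be any map satisfying the discrete variational derivative identity: H(w₂,…,w_{k+1}) − H(w₁,…,w_k) = ⟨ δ̄H(w₁,…,w_{k+1}), w_{k+1} − w₁ ⟩ for all w₁,…,w_{k+1} ∈ ℝ^N. Let Δt ∈ ℝ, let (Dₙ)_{n∈ℕ} be skew-symmetric N×N real matrices, and let (Uₙ)_{n∈ℕ} be a sequence in ℝ^N satisfying the scheme U_{n+k} − U_n = k² Δt · Dₙ (δ̄H(U_n, U_{n+1}, …, U_{n+k})) for all n ∈ ℕ. Then the scheme is conservative: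 H(U_n, U_{n+1}, …, U_{n+k−1}) = H(U₀, U₁, …, U_{k−1}) for all n ∈ ℕ. -/
open Matrix

/-- The polarised discrete variational derivative (PDVD) scheme
`U_{n+k} - U_n = k² Δt Dₙ δ̄H(U_n,…,U_{n+k})`, built from any map `δ̄H` satisfying
the discrete variational derivative identity and skew-symmetric matrices `Dₙ`,
is conservative: `H(U_n,…,U_{n+k-1}) = H(U₀,…,U_{k-1})` for all `n`. -/
theorem pdvd_scheme_is_conservative
    {N : ℕ} (k : ℕ) (hk : 1 ≤ k)
    (H : (Fin k → (Fin N → ℝ)) → ℝ)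
    (dH : (Fin (k + 1) → (Fin N → ℝ)) → (Fin N → ℝ))
    (hdH : ∀ w : Fin (k + 1) → (Fin N → ℝ),
      H (fun i : Fin k => w i.succ) - H (fun i : Fin k => w i.castSucc) =
        dH w ⬝ᵥ (w (Fin.last k) - w 0))
    (Δt : ℝ) (D : ℕ → Matrix (Fin N) (Fin N) ℝ) (hD : ∀ n, (D n)ᵀ = -(D n))
    (U : ℕ → (Fin N → ℝ))
    (hU : ∀ n : ℕ, U (n + k) - U n =
      ((k : ℝ) ^ 2 * Δt) • (D n).mulVec (dH (fun i : Fin (k + 1) => U (n + (i : ℕ))))) :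
    ∀ n : ℕ, H (fun i : Fin k => U (n + (i : ℕ))) = H (fun i : Fin k => U (i : ℕ)) := by
  intro n
  induction n with
  | zero => simp
  | succ n ih =>
    rw [← ih]
    have h := hdH (fun i : Fin (k + 1) => U (n + (i : ℕ)))
    have hskew : ∀ v : Fin N → ℝ, v ⬝ᵥ (D n).mulVec v = 0 := by
      intro v
      have h1 : v ⬝ᵥ (D n).mulVec v = -(v ⬝ᵥ (D n).mulVec v) := by
        conv_lhs => rw [Matrix.dotProduct_mulVec, ← Matrix.mulVec_transpose, hD n,
          Matrix.neg_mulVec, neg_dotProduct, dotProduct_comm]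
      linarith
    simp only [Fin.val_succ, Fin.val_castSucc, Fin.val_last, Fin.val_zero, add_zero] at h
    rw [hU n, dotProduct_smul, hskew, smul_zero, sub_eq_zero] at h
    rw [← h]
    congr 1
    funext i
    congr 1
    omega
end

section
/- Let k ≥ 1 and let H : (ℝ^N)^k → ℝ be continuously differentiable, and suppose H is a quadratic polynomial in its first argument: for every fixed w₂,…,w_k ∈ ℝ^N and every w₁, h ∈ ℝ^N, the function t ↦ H(w₁ + t h, w₂, …, w_k) is a real polynomial in t of degree at most 2. Then for every fixed v, w₂, …, w_k ∈ ℝ^N, the polarised AVF discrete variational derivative F(u) := ∫₀¹ ∇₁H(ξu + (1−ξ)v, w₂, …, w_k) dξ is an affine function of u: F((1−s)u + s u') = (1−s)F(u) + s F(u') for all u, u' ∈ ℝ^N and s ∈ ℝ. Consequently the polarised AVF scheme requires only the solution of a linear system for its newest unknown, i.e. it is linearly implicit. -/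
theorem avf_fderiv_affine {E : Type*} [NormedAddCommGroup E] [NormedSpace ℝ E]
    (g : E → ℝ) (hg : Differentiable ℝ g)
    (hq : ∀ x h : E, ∃ a b c : ℝ, ∀ t : ℝ, g (x + t • h) = a * t ^ 2 + b * t + c)
    (x y : E) (s : ℝ) :
    fderiv ℝ g ((1 - s) • x + s • y) = (1 - s) • fderiv ℝ g x + s • fderiv ℝ g y := by
  have key : ∀ x h : E, g (x + h) - g (x - h) = 2 * fderiv ℝ g x h := by
    intro x h
    obtain ⟨a, b, c, H⟩ := hq x h
    have h1 : HasDerivAt (fun t : ℝ => g (x + t • h)) (fderiv ℝ g x h) 0 := by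
      have hl : HasDerivAt (fun t : ℝ => x + t • h) h 0 := by
        simpa using ((hasDerivAt_id (0 : ℝ)).smul_const h).const_add x
      have hf : HasFDerivAt g (fderiv ℝ g x) (x + (0 : ℝ) • h) := by
        simpa using (hg x).hasFDerivAt
      exact hf.comp_hasDerivAt (0 : ℝ) hl
    have h2 : HasDerivAt (fun t : ℝ => g (x + t • h)) b 0 := by
      have : (fun t : ℝ => g (x + t • h)) = fun t => a * t ^ 2 + b * t + c := funext H
      rw [this]
      have h3 := ((((hasDerivAt_id (0 : ℝ)).pow 2).const_mul a).add
        ((hasDerivAt_id (0 : ℝ)).const_mul b)).add_const c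
      exact HasDerivAt.congr_deriv h3 (by simp)
    have h3 := h1.unique h2
    have e1 := H 1
    have e2 := H (-1)
    simp only [one_smul, neg_smul, ← sub_eq_add_neg] at e1 e2
    rw [e1, e2, h3]
    ring
  ext h
  set d := y - x with hd
  obtain ⟨a1, b1, c1, H1⟩ := hq (x + h) d
  obtain ⟨a2, b2, c2, H2⟩ := hq (x - h) d
  obtain ⟨a3, b3, c3, H3⟩ := hq x (d + h)
  obtain ⟨a4, b4, c4, H4⟩ := hq x (d - h)
  have B : ∀ t : ℝ, 2 * fderiv ℝ g (x + t • d) h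
      = (a1 - a2) * t ^ 2 + (b1 - b2) * t + (c1 - c2) := by
    intro t
    rw [← key, show x + t • d + h = x + h + t • d by abel,
      show x + t • d - h = x - h + t • d by abel, H1, H2]
    ring
  have C : ∀ t : ℝ, (a3 - a4) * t ^ 2 + (b3 - b4) * t + (c3 - c4)
      = t * ((a1 - a2) * t ^ 2 + (b1 - b2) * t + (c1 - c2)) := by
    intro t
    have h1 := key (x + t • d) (t • h)
    rw [show x + t • d + t • h = x + t • (d + h) by module,
      show x + t • d - t • h = x + t • (d - h) by module, H3, H4, map_smul, smul_eq_mul] at h1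
    rw [← B t]
    linarith
  have C0 := C 0
  have C1 := C 1
  have C2 := C (-1)
  have C3 := C 2
  have hz : a1 - a2 = 0 := by linarith
  have B0 := B 0
  have B1 := B 1
  have Bs := B s
  rw [show x + s • d = (1 - s) • x + s • y by rw [hd]; module] at Bs
  rw [show x + (1 : ℝ) • d = y by rw [hd]; module] at B1
  rw [show x + (0 : ℝ) • d = x by module] at B0
  rw [hz] at B0 B1 Bs
  simp only [add_apply, smul_apply, smul_eq_mul]
  linear_combination Bs / 2 - (1 - s) * B0 / 2 - s * B1 / 2

/-- If the polarised Hamiltonian `H : (ℝ^N)^k → ℝ` is a quadratic polynomial in its first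
argument, then for fixed `v, w₂, …, w_k` the polarised AVF discrete variational derivative
`F(u) = ∫₀¹ ∇₁H(ξu + (1-ξ)v, w₂,…,w_k) dξ` is an affine function of `u`; hence the
polarised AVF scheme is linearly implicit. -/
theorem polarised_avf_is_linearly_implicit
    {N k : ℕ} [NeZero k]
    (H : (Fin k → EuclideanSpace ℝ (Fin N)) → ℝ) (hH : ContDiff ℝ 1 H)
    (hquad : ∀ (w : Fin k → EuclideanSpace ℝ (Fin N)) (w₁ h : EuclideanSpace ℝ (Fin N)),
      ∃ a b c : ℝ, ∀ t : ℝ,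
        H (Function.update w 0 (w₁ + t • h)) = a * t ^ 2 + b * t + c)
    (v : EuclideanSpace ℝ (Fin N)) (w : Fin k → EuclideanSpace ℝ (Fin N)) :
    ∀ (u u' : EuclideanSpace ℝ (Fin N)) (s : ℝ),
      (∫ ξ in (0:ℝ)..1,
          gradient (fun x => H (Function.update w 0 x))
            (ξ • ((1 - s) • u + s • u') + (1 - ξ) • v)) =
        (1 - s) • (∫ ξ in (0:ℝ)..1,
            gradient (fun x => H (Function.update w 0 x)) (ξ • u + (1 - ξ) • v)) +
          s • (∫ ξ in (0:ℝ)..1,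
            gradient (fun x => H (Function.update w 0 x)) (ξ • u' + (1 - ξ) • v)) := by
  intro u u' s
  set g : EuclideanSpace ℝ (Fin N) → ℝ := fun x => H (Function.update w 0 x) with hgdef
  have hg : ContDiff ℝ 1 g := hH.comp (contDiff_update 1 w 0)
  have hD := hg.differentiable one_ne_zero
  have haff : ∀ x y : EuclideanSpace ℝ (Fin N),
      gradient g ((1 - s) • x + s • y) = (1 - s) • gradient g x + s • gradient g y := by
    intro x y
    simp only [gradient]
    rw [avf_fderiv_affine g hD (fun x h => hquad w x h) x y s]
    simp
  have hc : Continuous (gradient g) :=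
    (InnerProductSpace.toDual ℝ (EuclideanSpace ℝ (Fin N))).symm.continuous.comp
      (hg.continuous_fderiv one_ne_zero)
  have hi : ∀ z : EuclideanSpace ℝ (Fin N), ∀ r : ℝ, IntervalIntegrable
      (fun ξ : ℝ => r • gradient g (ξ • z + (1 - ξ) • v)) MeasureTheory.volume 0 1 := by
    intro z r
    apply Continuous.intervalIntegrable
    exact (hc.comp (by fun_prop)).const_smul r
  rw [← intervalIntegral.integral_smul, ← intervalIntegral.integral_smul,
    ← intervalIntegral.integral_add (hi u _) (hi u' _)]
  congr 1
  funext ξ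
  rw [← haff]
  congr 1
  module
end

section
/- Let E be a real normed vector space, let k ≥ 1 be odd, and let H : E^k → ℝ be twice continuously Fréchet differentiable and cyclic, i.e. H(w₁,…,w_k) = H(w₂,…,w_k,w₁) for all arguments. Define 𝓗 : E → ℝ by 𝓗(u) = H(u,…,u), and for u ∈ E set B_{1ℓ}(h,h) := D²H(u,…,u)(ι₁ h, ι_ℓ h), where ι_j h ∈ E^k is the tuple with h in slot j and 0 elsewhere. Then for all u, h ∈ E: D²𝓗(u)(h,h) = k ( B_{11}(h,h) + 2 Σ_{ℓ=2}^{(k+1)/2} B_{1ℓ}(h,h) ). -/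
theorem aux_second_fderiv_comp {F G : Type*} [NormedAddCommGroup F] [NormedSpace ℝ F]
    [NormedAddCommGroup G] [NormedSpace ℝ G] (f : G → ℝ) (hf : ContDiff ℝ 2 f) (L : F →L[ℝ] G)
    (x a b : F) :
    fderiv ℝ (fderiv ℝ (fun y => f (L y))) x a b
      = fderiv ℝ (fderiv ℝ f) (L x) (L a) (L b) := by
  have hd : Differentiable ℝ f := hf.differentiable (by norm_num)
  have hd2 : Differentiable ℝ (fderiv ℝ f) :=
    (hf.fderiv_right (m := 1) (by norm_num)).differentiable (by norm_num)
  have h1 : fderiv ℝ (fun y => f (L y)) = fun y => (fderiv ℝ f (L y)).comp L := by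
    funext y
    exact ((hd (L y)).hasFDerivAt.comp y L.hasFDerivAt).fderiv
  rw [h1]
  have h2 : HasFDerivAt (fun y => fderiv ℝ f (L y)) ((fderiv ℝ (fderiv ℝ f) (L x)).comp L) x :=
    (hd2 (L x)).hasFDerivAt.comp x L.hasFDerivAt
  have h3 := h2.clm_comp (hasFDerivAt_const L x)
  rw [h3.fderiv]
  simp

theorem aux_sum_reflect (m : ℕ) (C : ℕ → ℝ)
    (hC : ∀ n, 1 ≤ n → n ≤ 2 * m → C n = C (2 * m + 1 - n)) :
    ∑ n ∈ Finset.range (2 * m + 1), C n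
      = C 0 + 2 * ∑ l ∈ Finset.Icc 2 (m + 1), C (l - 1) := by
  have e : ∑ l ∈ Finset.Icc 2 (m + 1), C (l - 1) = ∑ n ∈ Finset.range m, C (n + 1) := by
    rw [show Finset.Icc 2 (m + 1) = Finset.Ico 2 (m + 2) from by ext; simp; omega,
      Finset.sum_Ico_eq_sum_range]
    refine Finset.sum_congr (by simp) fun i _ => ?_
    congr 1
    omega
  rw [e, Finset.sum_range_succ', two_mul m, Finset.sum_range_add]
  have e2 : ∑ x ∈ Finset.range m, C (m + x + 1) = ∑ n ∈ Finset.range m, C (n + 1) := by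
    rw [← Finset.sum_range_reflect]
    refine Finset.sum_congr rfl fun i hi => ?_
    have := Finset.mem_range.1 hi
    rw [hC _ (by omega) (by omega)]
    congr 1
    omega
  rw [e2]
  ring

/-- For odd `k` and a twice continuously differentiable cyclic `H : E^k → ℝ`, the second
derivative of the diagonal restriction `𝓗(u) = H(u,…,u)` satisfies
`D²𝓗(u)(h,h) = k (B₁₁(h,h) + 2 Σ_{ℓ=2}^{(k+1)/2} B_{1ℓ}(h,h))`, where
`B_{1ℓ}(h,h) = D²H(u,…,u)(ι₁ h, ι_ℓ h)` (slot `ℓ` is 0-based index `ℓ-1`). -/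
theorem diagonal_second_derivative_of_cyclic_odd
    {E : Type*} [NormedAddCommGroup E] [NormedSpace ℝ E]
    {k : ℕ} (hk : 1 ≤ k) (hodd : Odd k)
    (H : (Fin k → E) → ℝ) (hH : ContDiff ℝ 2 H)
    (hcyc : ∀ w : Fin k → E,
      H w = H (fun i : Fin k => w ⟨((i : ℕ) + 1) % k, Nat.mod_lt _ i.pos⟩))
    (u h : E) :
    fderiv ℝ (fderiv ℝ (fun x : E => H (fun _ => x))) u h h =
      (k : ℝ) *
        (fderiv ℝ (fderiv ℝ H) (fun _ => u)
            (Pi.single (⟨0, by omega⟩ : Fin k) h) (Pi.single (⟨0, by omega⟩ : Fin k) h) +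
          2 * ∑ l ∈ Finset.Icc 2 ((k + 1) / 2),
            fderiv ℝ (fderiv ℝ H) (fun _ => u)
              (Pi.single (⟨0, by omega⟩ : Fin k) h)
              (Pi.single (⟨(l - 1) % k, Nat.mod_lt _ (by omega)⟩ : Fin k) h)) := by
  obtain ⟨m, rfl⟩ := hodd
  set B := fderiv ℝ (fderiv ℝ H) (fun _ => u) with hB
  -- symmetry of the second derivative
  have hsymm : ∀ a b, B a b = B b a := by
    intro a b
    have := (hH.contDiffAt (x := fun _ => u)).isSymmSndFDerivAt (by simp)
    exact this a b
  -- the diagonal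
  have hdiag : fderiv ℝ (fderiv ℝ (fun x : E => H (fun _ => x))) u h h
      = B (fun _ => h) (fun _ => h) :=
    aux_second_fderiv_comp H hH
      (ContinuousLinearMap.pi fun _ : Fin (2 * m + 1) => ContinuousLinearMap.id ℝ E) u h h
  -- cyclic invariance
  have hsh : ∀ a b : Fin (2 * m + 1) → E,
      B a b = B (fun i => a (i + 1)) (fun i => b (i + 1)) := by
    intro a b
    have h1 := aux_second_fderiv_comp H hH
      (ContinuousLinearMap.pi fun i : Fin (2 * m + 1) =>
        ContinuousLinearMap.proj (R := ℝ) (φ := fun _ : Fin (2 * m + 1) => E) (i + 1))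
      (fun _ => u) a b
    have h2 : (fun y => H ((ContinuousLinearMap.pi fun i : Fin (2 * m + 1) =>
        ContinuousLinearMap.proj (R := ℝ) (φ := fun _ : Fin (2 * m + 1) => E) (i + 1)) y)) = H := by
      funext w
      rw [hcyc w]
      congr 1
      funext i
      simp only [ContinuousLinearMap.coe_pi', ContinuousLinearMap.proj_apply]
      congr 1
      ext
      simp [Fin.val_add]
    rw [h2] at h1
    exact h1
  let A : Fin (2 * m + 1) → Fin (2 * m + 1) → ℝ := fun i j => B (Pi.single i h) (Pi.single j h)
  have hsingle : ∀ j : Fin (2 * m + 1),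
      (fun i => (Pi.single (j + 1) h : Fin (2 * m + 1) → E) (i + 1)) = Pi.single j h := by
    intro j
    funext i
    simp [Pi.single_apply]
  have hA1 : ∀ i j, A (i + 1) (j + 1) = A i j := by
    intro i j
    simp only [A]
    rw [hsh, hsingle, hsingle]
  have hAn : ∀ (n : ℕ) i j, A (i + Fin.ofNat (2 * m + 1) n) (j + Fin.ofNat (2 * m + 1) n) = A i j := by
    intro n
    induction n with
    | zero =>
      intro i j
      have h0 : Fin.ofNat (2 * m + 1) 0 = 0 := rfl
      simp [h0]
    | succ n ih =>
      intro i j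
      have h0 : Fin.ofNat (2 * m + 1) (n + 1) = Fin.ofNat (2 * m + 1) n + 1 := by
        ext
        simp [Fin.val_add]
      rw [h0, ← add_assoc, ← add_assoc, hA1, ih]
  have hA : ∀ i j t, A (i + t) (j + t) = A i j := by
    intro i j t
    have := hAn t.val i j
    have h0 : Fin.ofNat (2 * m + 1) t.val = t := by
      ext
      simp [Nat.mod_eq_of_lt t.isLt]
    rwa [h0] at this
  have hAs : ∀ i j, A i j = A j i := fun i j => hsymm _ _
  have hneg : ∀ j, A 0 j = A 0 (-j) := by
    intro j
    rw [← hA 0 j (-j), hAs]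
    simp
  have hsum : B (fun _ => h) (fun _ => h) = ∑ i, ∑ j, A i j := by
    have hc : (fun _ : Fin (2 * m + 1) => h) = ∑ i, Pi.single i h :=
      (Finset.univ_sum_single (fun _ : Fin (2 * m + 1) => h)).symm
    rw [hc]
    simp only [map_sum, sum_apply, A]
    exact Finset.sum_comm
  have hrow : ∀ i, ∑ j, A i j = ∑ j, A 0 j := by
    intro i
    rw [← Equiv.sum_comp (Equiv.addRight i)]
    refine Finset.sum_congr rfl fun j _ => ?_
    have := hA 0 j i
    rwa [zero_add] at this
  rw [hdiag, hsum, Finset.sum_congr rfl fun i _ => hrow i, Finset.sum_const, Finset.card_univ,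
    Fintype.card_fin, nsmul_eq_mul]
  congr 1
  let C : ℕ → ℝ := fun n => A 0 ⟨n % (2 * m + 1), Nat.mod_lt _ (by omega)⟩
  have hC : ∀ n, 1 ≤ n → n ≤ 2 * m → C n = C (2 * m + 1 - n) := by
    intro n h1 h2
    simp only [C]
    rw [hneg]
    congr 1
    ext
    rw [Fin.val_neg']
    simp only [Nat.mod_eq_of_lt (show n < 2 * m + 1 by omega)]
  have key := aux_sum_reflect m C hC
  have hr : ∑ j, A 0 j = ∑ n ∈ Finset.range (2 * m + 1), C n := by
    rw [← Fin.sum_univ_eq_sum_range]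
    refine Finset.sum_congr rfl fun j _ => ?_
    simp only [C]
    congr 1
    ext
    simp [Nat.mod_eq_of_lt j.isLt]
  rw [hr, key, show (2 * m + 1 + 1) / 2 = m + 1 by omega]
  congr 1
end

section
/- Let E be a real normed vector space, let k ≥ 2 be even, and let H : E^k → ℝ be twice continuously Fréchet differentiable and cyclic, i.e. H(w₁,…,w_k) = H(w₂,…,w_k,w₁) for all arguments. Define 𝓗 : E → ℝ by 𝓗(u) = H(u,…,u), and for u ∈ E set B_{1ℓ}(h,h) := D²H(u,…,u)(ι₁ h, ι_ℓ h), where ι_j h ∈ E^k is the tuple with h in slot j and 0 elsewhere. Then for all u, h ∈ E: D²𝓗(u)(h,h) = k ( B_{11}(h,h) + 2 Σ_{ℓ=2}^{k/2} B_{1ℓ}(h,h) + B_{1, k/2+1}(h,h) ). -/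
theorem aux_comp {F G : Type*} [NormedAddCommGroup F] [NormedSpace ℝ F]
    [NormedAddCommGroup G] [NormedSpace ℝ G] (H : G → ℝ) (hH : ContDiff ℝ 2 H)
    (L : F →L[ℝ] G) (x a b : F) :
    fderiv ℝ (fderiv ℝ (fun y => H (L y))) x a b
      = fderiv ℝ (fderiv ℝ H) (L x) (L a) (L b) := by
  have hd : Differentiable ℝ H := hH.differentiable (by norm_num)
  have hd2 : Differentiable ℝ (fderiv ℝ H) :=
    (hH.fderiv_right (m := 1) (by norm_num)).differentiable (by norm_num)
  have h1 : fderiv ℝ (fun y => H (L y)) = fun y => (fderiv ℝ H (L y)).comp L := by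
    funext y
    exact ((hd (L y)).hasFDerivAt.comp y L.hasFDerivAt).fderiv
  have h2 : HasFDerivAt (fun y => fderiv ℝ H (L y))
      ((fderiv ℝ (fderiv ℝ H) (L x)).comp L) x :=
    (hd2 (L x)).hasFDerivAt.comp x L.hasFDerivAt
  have h3 := h2.clm_comp (hasFDerivAt_const L x)
  rw [h1, h3.fderiv]
  simp

theorem aux_sum (c : ℕ → ℝ) (p : ℕ) (hc : ∀ n, n ≤ 2 * p + 2 → c (2 * p + 2 - n) = c n) :
    ∑ n ∈ Finset.range (2 * p + 2), c n
      = c 0 + 2 * ∑ l ∈ Finset.Icc 2 (p + 1), c (l - 1) + c (p + 1) := by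
  have e1 : ∑ l ∈ Finset.Icc 2 (p + 1), c (l - 1) = ∑ i ∈ Finset.range p, c (i + 1) := by
    symm
    apply Finset.sum_bij (fun i _ => i + 2)
    · intro i hi
      simp at hi ⊢
      omega
    · intro i _ j _ hij
      omega
    · intro l hl
      simp at hl
      exact ⟨l - 2, by simp; omega, by omega⟩
    · intro i _
      rfl
  have e2 : ∑ i ∈ Finset.range p, c (p + 1 + 1 + i) = ∑ i ∈ Finset.range p, c (i + 1) := by
    rw [← Finset.sum_range_reflect]
    apply Finset.sum_congr rfl
    intro i hi
    simp at hi
    rw [← hc (i + 1) (by omega)]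
    congr 1
    omega
  rw [show 2 * p + 2 = (p + 1 + 1) + p by ring, Finset.sum_range_add, e2, Finset.sum_range_succ,
    Finset.sum_range_succ', e1]
  ring

theorem aux_cyc {k : ℕ} [NeZero k] (b : Fin k → Fin k → ℝ)
    (hs : ∀ i j, b i j = b j i) (hb : ∀ i j, b (i + 1) (j + 1) = b i j) :
    (∀ d, b 0 (-d) = b 0 d) ∧ ∑ i, ∑ j, b i j = k * ∑ d, b 0 d := by
  have hn : ∀ (n : ℕ) (i j : Fin k), b (i + Fin.ofNat k n) (j + Fin.ofNat k n) = b i j := by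
    intro n
    induction n with
    | zero =>
      intro i j
      have : Fin.ofNat k 0 = 0 := rfl
      rw [this, add_zero, add_zero]
    | succ n ih =>
      intro i j
      have : Fin.ofNat k (n + 1) = Fin.ofNat k n + 1 := by
        apply Fin.ext
        simp [Fin.val_add]
      rw [this, ← add_assoc, ← add_assoc, hb, ih]
  have hd : ∀ d i j : Fin k, b (i + d) (j + d) = b i j := by
    intro d i j
    have := hn d.val i j
    rwa [Fin.ofNat_val_eq_self] at this
  refine ⟨?_, ?_⟩
  · intro d
    have := hd d 0 (-d)
    rw [← this, hs]
    simp
  · have : ∀ i, ∑ j, b i j = ∑ d, b 0 d := by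
      intro i
      rw [← Equiv.sum_comp (Equiv.addRight i)]
      apply Finset.sum_congr rfl
      intro d _
      have := hd i 0 d
      rw [← this]
      simp
    simp [this]


/-- For even `k ≥ 2` and a twice continuously differentiable cyclic `H : E^k → ℝ`, the
second derivative of the diagonal restriction `𝓗(u) = H(u,…,u)` satisfies
`D²𝓗(u)(h,h) = k (B₁₁(h,h) + 2 Σ_{ℓ=2}^{k/2} B_{1ℓ}(h,h) + B_{1,k/2+1}(h,h))`, where
`B_{1ℓ}(h,h) = D²H(u,…,u)(ι₁ h, ι_ℓ h)` (slot `ℓ` is 0-based index `ℓ-1`). -/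
theorem diagonal_second_derivative_of_cyclic_even
    {E : Type*} [NormedAddCommGroup E] [NormedSpace ℝ E]
    {k : ℕ} (hk : 2 ≤ k) (heven : Even k)
    (H : (Fin k → E) → ℝ) (hH : ContDiff ℝ 2 H)
    (hcyc : ∀ w : Fin k → E,
      H w = H (fun i : Fin k => w ⟨((i : ℕ) + 1) % k, Nat.mod_lt _ i.pos⟩))
    (u h : E) :
    fderiv ℝ (fderiv ℝ (fun x : E => H (fun _ => x))) u h h =
      (k : ℝ) *
        (fderiv ℝ (fderiv ℝ H) (fun _ => u)
            (Pi.single (⟨0, by omega⟩ : Fin k) h) (Pi.single (⟨0, by omega⟩ : Fin k) h) +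
          2 * ∑ l ∈ Finset.Icc 2 (k / 2),
            fderiv ℝ (fderiv ℝ H) (fun _ => u)
              (Pi.single (⟨0, by omega⟩ : Fin k) h)
              (Pi.single (⟨(l - 1) % k, Nat.mod_lt _ (by omega)⟩ : Fin k) h) +
          fderiv ℝ (fderiv ℝ H) (fun _ => u)
            (Pi.single (⟨0, by omega⟩ : Fin k) h)
            (Pi.single (⟨k / 2, by omega⟩ : Fin k) h)) := by
  haveI : NeZero k := ⟨by omega⟩
  have hsucc : ∀ i : Fin k, (⟨((i : ℕ) + 1) % k, Nat.mod_lt _ i.pos⟩ : Fin k) = i + 1 := by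
    intro i
    apply Fin.ext
    simp [Fin.val_add]
  simp only [hsucc] at hcyc
  set b : Fin k → Fin k → ℝ := fun i j =>
    fderiv ℝ (fderiv ℝ H) (fun _ => u) (Pi.single i h) (Pi.single j h) with hbdef
  have hsym : ∀ i j, b i j = b j i := by
    intro i j
    have := hH.contDiffAt (x := fun _ => u)
    exact (this.isSymmSndFDerivAt (by simp)) _ _
  have hshift : ∀ i j, b (i + 1) (j + 1) = b i j := by
    intro i j
    let S : (Fin k → E) →L[ℝ] (Fin k → E) :=
      ContinuousLinearMap.pi fun i => ContinuousLinearMap.proj (i + 1)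
    have hS : (fun w => H (S w)) = H := by
      funext w
      exact (hcyc w).symm
    have hSs : ∀ i, S (Pi.single (i + 1) h) = Pi.single i h := by
      intro i
      ext j
      simp [S, Pi.single_apply]
    have := aux_comp H hH S (fun _ => u) (Pi.single (i + 1) h) (Pi.single (j + 1) h)
    rw [hS, hSs, hSs] at this
    exact this
  obtain ⟨hneg, hsum⟩ := aux_cyc b hsym hshift
  let D : E →L[ℝ] (Fin k → E) := ContinuousLinearMap.pi fun _ => ContinuousLinearMap.id ℝ E
  have hD : D h = ∑ i, Pi.single i h := by
    ext j
    simp [D, Finset.sum_apply, Pi.single_apply]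
  have hL : fderiv ℝ (fderiv ℝ (fun x : E => H (fun _ => x))) u h h = ∑ i, ∑ j, b i j := by
    have h1 := aux_comp H hH D u h h
    rw [hD] at h1
    simp only [map_sum, ContinuousLinearMap.sum_apply] at h1
    refine h1.trans ?_
    rw [Finset.sum_comm]
    rfl
  rw [hL, hsum]
  congr 1
  obtain ⟨m, hm⟩ := heven
  obtain ⟨p, rfl⟩ : ∃ p, m = p + 1 := ⟨m - 1, by omega⟩
  have hkp : k = 2 * p + 2 := by omega
  have hk2 : k / 2 = p + 1 := by omega
  have key := aux_sum (fun n => b 0 (Fin.ofNat k n)) p (by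
    intro n hn
    rw [← hneg]
    congr 1
    rw [neg_eq_iff_add_eq_zero]
    apply Fin.ext
    simp [Fin.val_add]
    rw [show 2 * p + 2 - n + n = k by omega]
    simp)
  rw [← hkp, ← hk2, Finset.sum_range] at key
  simp only [Fin.ofNat_val_eq_self] at key
  rw [key]
  have hh : Fin.ofNat k (k / 2) = ⟨k / 2, by omega⟩ := Fin.ext (Nat.mod_eq_of_lt (by omega))
  rw [hh]
  rfl
end

section
/- Let θ ∈ ℝ, Δt > 0, k ∈ ℤ, and let ζ ∈ ℂ with ζ ≠ 0. Set τ = −k³Δt and define Uₙ : ℝ → ℂ by Uₙ(x) = ζⁿ e^{ikx}. Then the sequence (Uₙ) satisfies the linearly implicit scheme for the Airy equation, (U_{n+2}(x) − U_n(x))/(2Δt) = d/dx [ θ(U_{n+2}''(x) + U_n''(x))/2 + (1−θ) U_{n+1}''(x) ] for all n ∈ ℕ and all x ∈ ℝ, if and only if ζ satisfies the quadratic equation (1 − θτi)ζ² − 2(1−θ)τi ζ − (1 + θτi) = 0. -/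
/-- The Fourier mode ansatz `Uₙ(x) = ζⁿ e^{ikx}`. -/
noncomputable def airyMode (ζ : ℂ) (k : ℤ) (n : ℕ) (x : ℝ) : ℂ :=
  ζ ^ n * Complex.exp (Complex.I * (k : ℂ) * (x : ℂ))

theorem airyMode_hasDerivAt (ζ : ℂ) (k : ℤ) (n : ℕ) (c : ℂ) (x : ℝ) :
    HasDerivAt (fun y : ℝ => c * airyMode ζ k n y)
      (c * (Complex.I * (k : ℂ)) * airyMode ζ k n x) x := by
  have h0 : HasDerivAt (fun y : ℝ => (y : ℂ)) 1 x := Complex.ofRealCLM.hasDerivAt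
  have h := (((h0.const_mul (Complex.I * (k : ℂ))).cexp).const_mul (ζ ^ n)).const_mul c
  unfold airyMode
  refine h.congr_deriv ?_
  ring

theorem airyMode_deriv2 (ζ : ℂ) (k : ℤ) (n : ℕ) :
    deriv (deriv (airyMode ζ k n)) =
      fun y => (Complex.I * (k : ℂ)) * (Complex.I * (k : ℂ)) * airyMode ζ k n y := by
  have h1 : deriv (airyMode ζ k n) = fun y => (Complex.I * (k : ℂ)) * airyMode ζ k n y := by
    funext y
    simpa using (airyMode_hasDerivAt ζ k n 1 y).deriv
  rw [h1]
  funext y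
  exact (airyMode_hasDerivAt ζ k n _ y).deriv

theorem airyMode_rhs (θ : ℂ) (k : ℤ) (ζ : ℂ) (n : ℕ) (x : ℝ) :
    deriv (fun y : ℝ =>
            θ * (deriv (deriv (airyMode ζ k (n + 2))) y +
                deriv (deriv (airyMode ζ k n)) y) / 2 +
              (1 - θ) * deriv (deriv (airyMode ζ k (n + 1))) y) x =
      (Complex.I * (k : ℂ)) ^ 3 * (θ * (ζ ^ 2 + 1) / 2 + (1 - θ) * ζ) * airyMode ζ k n x := by
  simp only [airyMode_deriv2]
  have e : (fun y : ℝ =>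
      θ * (Complex.I * (k : ℂ) * (Complex.I * (k : ℂ)) * airyMode ζ k (n + 2) y +
        Complex.I * (k : ℂ) * (Complex.I * (k : ℂ)) * airyMode ζ k n y) / 2 +
      (1 - θ) * (Complex.I * (k : ℂ) * (Complex.I * (k : ℂ)) * airyMode ζ k (n + 1) y)) =
      fun y : ℝ => ((Complex.I * (k : ℂ)) ^ 2 * (θ * (ζ ^ 2 + 1) / 2 + (1 - θ) * ζ)) *
        airyMode ζ k n y := by
    funext y
    unfold airyMode
    ring
  rw [e, (airyMode_hasDerivAt ζ k n _ x).deriv]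
  ring

/-- The mode `Uₙ(x) = ζⁿ e^{ikx}` satisfies the two-step linearly implicit scheme for the
Airy equation, `(U_{n+2} - U_n)/(2Δt) = ∂ₓ(θ(U''_{n+2} + U''_n)/2 + (1-θ)U''_{n+1})`,
if and only if `ζ` is a root of the von Neumann stability polynomial
`(1 - θτi)ζ² - 2(1-θ)τi ζ - (1 + θτi)` with `τ = -k³Δt`. -/
theorem airy_scheme_iff_stability_polynomial
    (θ Δt : ℝ) (hΔt : 0 < Δt) (k : ℤ) (ζ : ℂ) (hζ : ζ ≠ 0) :
    (∀ (n : ℕ) (x : ℝ),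
        (airyMode ζ k (n + 2) x - airyMode ζ k n x) / (2 * (Δt : ℂ)) =
          deriv (fun y : ℝ =>
            (θ : ℂ) * (deriv (deriv (airyMode ζ k (n + 2))) y +
                deriv (deriv (airyMode ζ k n)) y) / 2 +
              (1 - (θ : ℂ)) * deriv (deriv (airyMode ζ k (n + 1))) y) x) ↔
      (1 - (θ : ℂ) * ((-(k : ℝ) ^ 3 * Δt : ℝ) : ℂ) * Complex.I) * ζ ^ 2 -
          2 * (1 - (θ : ℂ)) * ((-(k : ℝ) ^ 3 * Δt : ℝ) : ℂ) * Complex.I * ζ -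
          (1 + (θ : ℂ) * ((-(k : ℝ) ^ 3 * Δt : ℝ) : ℂ) * Complex.I) = 0 := by
  have hD : (Δt : ℂ) ≠ 0 := by exact_mod_cast hΔt.ne'
  have hI : Complex.I ^ 3 = -Complex.I := Complex.I_pow_three
  have key : ∀ (n : ℕ) (x : ℝ), airyMode ζ k (n + 2) x - airyMode ζ k n x =
      (ζ ^ 2 - 1) * airyMode ζ k n x := by
    intro n x
    unfold airyMode
    ring
  have hne : ∀ (n : ℕ) (x : ℝ), airyMode ζ k n x ≠ 0 := fun n x =>
    mul_ne_zero (pow_ne_zero _ hζ) (Complex.exp_ne_zero _)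
  simp only [airyMode_rhs, key]
  push_cast
  have h2 : ∀ (n : ℕ) (x : ℝ), ((ζ ^ 2 - 1) * airyMode ζ k n x / (2 * (Δt : ℂ)) =
      (Complex.I * (k : ℂ)) ^ 3 * ((θ : ℂ) * (ζ ^ 2 + 1) / 2 + (1 - (θ : ℂ)) * ζ) *
        airyMode ζ k n x) ↔
      ζ ^ 2 - 1 = (Complex.I * (k : ℂ)) ^ 3 *
        ((θ : ℂ) * (ζ ^ 2 + 1) / 2 + (1 - (θ : ℂ)) * ζ) * (2 * (Δt : ℂ)) := by
    intro n x
    rw [div_eq_iff (mul_ne_zero two_ne_zero hD), mul_right_comm _ (airyMode ζ k n x)]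
    exact mul_left_inj' (hne n x)
  simp only [h2, forall_const]
  simp only [mul_pow, hI]
  constructor
  · intro h
    linear_combination h
  · intro h
    linear_combination h
end

section
/- Let L > 0, Δt ≠ 0, and let u, v : ℝ → ℝ be smooth L-periodic functions satisfying, for every x ∈ ℝ, the fully implicit AVF scheme for the KdV equation: (v(x) − u(x))/Δt + (v'''(x) + u'''(x))/2 + d/dx[ (v(x)² + v(x)u(x) + u(x)²)/3 ] = 0. Then the KdV Hamiltonian is exactly conserved over the step: ∫₀ᴸ ( (1/2) v'(x)² − (1/3) v(x)³ ) dx = ∫₀ᴸ ( (1/2) u'(x)² − (1/3) u(x)³ ) dx. -/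
/-- One step of the fully implicit AVF scheme for the KdV equation,
`(v - u)/Δt + (v''' + u''')/2 + ((v² + vu + u²)/3)' = 0`, exactly conserves the
KdV Hamiltonian `𝓗[u] = ∫₀ᴸ ((1/2)u_x² - (1/3)u³) dx` on L-periodic smooth functions. -/
theorem kdv_avf_scheme_conserves_hamiltonian
    (L Δt : ℝ) (hL : 0 < L) (hΔt : Δt ≠ 0)
    (u v : ℝ → ℝ) (hu : ContDiff ℝ (⊤ : ℕ∞) u) (hv : ContDiff ℝ (⊤ : ℕ∞) v)
    (hup : Function.Periodic u L) (hvp : Function.Periodic v L)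
    (hscheme : ∀ x : ℝ,
      (v x - u x) / Δt + (deriv (deriv (deriv v)) x + deriv (deriv (deriv u)) x) / 2 +
        deriv (fun y => ((v y) ^ 2 + v y * u y + (u y) ^ 2) / 3) x = 0) :
    (∫ x in (0:ℝ)..L, ((1 / 2) * (deriv v x) ^ 2 - (1 / 3) * (v x) ^ 3)) =
      ∫ x in (0:ℝ)..L, ((1 / 2) * (deriv u x) ^ 2 - (1 / 3) * (u x) ^ 3) := by
  have smooth : ∀ f : ℝ → ℝ, ContDiff ℝ (⊤ : ℕ∞) f → ContDiff ℝ (⊤ : ℕ∞) (deriv f) := by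
    intro f hf
    exact (contDiff_infty_iff_deriv.1 hf).2
  have hd : ∀ f : ℝ → ℝ, ContDiff ℝ (⊤ : ℕ∞) f → ∀ x, HasDerivAt f (deriv f x) x := by
    intro f hf x
    exact ((contDiff_infty_iff_deriv.1 hf).1 x).hasDerivAt
  have per : ∀ f : ℝ → ℝ, Function.Periodic f L → Function.Periodic (deriv f) L := by
    intro f hf x
    rw [← deriv_comp_add_const]
    congr 1
    funext y
    exact hf y
  have hu1 := smooth u hu
  have hu2 := smooth _ hu1
  have hv1 := smooth v hv
  have hv2 := smooth _ hv1
  have cu := hu.continuous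
  have cv := hv.continuous
  have cu1 := hu1.continuous
  have cv1 := hv1.continuous
  have iv : IntervalIntegrable (fun x => (1 / 2) * (deriv v x) ^ 2 - (1 / 3) * (v x) ^ 3)
      MeasureTheory.volume 0 L := Continuous.intervalIntegrable (by fun_prop) _ _
  have iu : IntervalIntegrable (fun x => (1 / 2) * (deriv u x) ^ 2 - (1 / 3) * (u x) ^ 3)
      MeasureTheory.volume 0 L := Continuous.intervalIntegrable (by fun_prop) _ _
  rw [← sub_eq_zero, ← intervalIntegral.integral_sub iv iu]
  -- the difference of the densities is the derivative of a periodic function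
  rw [intervalIntegral.integral_eq_sub_of_hasDerivAt
    (f := fun x => (v x - u x) * (deriv v x + deriv u x) / 2 +
      Δt * ((deriv (deriv v) x + deriv (deriv u) x) / 2 +
        ((v x) ^ 2 + v x * u x + (u x) ^ 2) / 3) ^ 2 / 2) _ (iv.sub iu)]
  · have a1 := hup 0
    have a2 := hvp 0
    have a3 := per _ hup 0
    have a4 := per _ hvp 0
    have a5 := per _ (per _ hup) 0
    have a6 := per _ (per _ hvp) 0
    rw [zero_add] at a1 a2 a3 a4 a5 a6
    simp only [a1, a2, a3, a4, a5, a6, sub_self]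
  · intro x _
    have hq : HasDerivAt (fun y => ((v y) ^ 2 + v y * u y + (u y) ^ 2) / 3)
        (deriv (fun y => ((v y) ^ 2 + v y * u y + (u y) ^ 2) / 3) x) x := by
      apply hd
      fun_prop
    have hs := hscheme x
    generalize deriv (fun y => ((v y) ^ 2 + v y * u y + (u y) ^ 2) / 3) x = q at hq hs
    have hw := (((hd _ hv2 x).add (hd _ hu2 x)).div_const 2).add hq
    have hF := ((((hd _ hv x).sub (hd _ hu x)).mul ((hd _ hv1 x).add (hd _ hu1 x))).div_const 2).add
      (((hw.pow 2).const_mul Δt).div_const 2)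
    refine hF.congr_deriv ?_
    have hs' : Δt * ((deriv (deriv (deriv v)) x + deriv (deriv (deriv u)) x) / 2 + q)
        = -(v x - u x) := by
      field_simp at hs ⊢
      linarith
    simp only [Pi.add_apply, Pi.sub_apply]
    push_cast
    linear_combination ((deriv (deriv v) x + deriv (deriv u) x) / 2 +
        ((v x) ^ 2 + v x * u x + (u x) ^ 2) / 3) * hs'
end

section
/- Let L > 0, Δt ≠ 0, and let u, v, w : ℝ → ℝ be smooth L-periodic functions satisfying, for every x ∈ ℝ, the linearly implicit polarised scheme for the KdV equation: (w(x) − u(x))/(2Δt) + (w'''(x) + u'''(x))/2 + d/dx[ v(x)(w(x) + v(x) + u(x))/3 ] = 0. Then the polarised Hamiltonian is exactly conserved: ∫₀ᴸ ( (1/4)(v'(x)² + w'(x)²) − (1/6)(v(x)²w(x) + w(x)²v(x)) ) dx = ∫₀ᴸ ( (1/4)(u'(x)² + v'(x)²) − (1/6)(u(x)²v(x) + v(x)²u(x)) ) dx. -/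
/-- One step of the linearly implicit polarised scheme for the KdV equation,
`(w - u)/(2Δt) + (w''' + u''')/2 + (v(w + v + u)/3)' = 0`, exactly conserves the
polarised Hamiltonian `H[a,b] = ∫₀ᴸ ((1/4)(a_x² + b_x²) - (1/6)(a²b + b²a)) dx`:
`H[v,w] = H[u,v]` for smooth L-periodic functions. -/
theorem kdv_linearly_implicit_scheme_conserves_polarised_hamiltonian
    (L Δt : ℝ) (hL : 0 < L) (hΔt : Δt ≠ 0)
    (u v w : ℝ → ℝ)
    (hu : ContDiff ℝ (⊤ : ℕ∞) u) (hv : ContDiff ℝ (⊤ : ℕ∞) v) (hw : ContDiff ℝ (⊤ : ℕ∞) w)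
    (hup : Function.Periodic u L) (hvp : Function.Periodic v L)
    (hwp : Function.Periodic w L)
    (hscheme : ∀ x : ℝ,
      (w x - u x) / (2 * Δt) +
        (deriv (deriv (deriv w)) x + deriv (deriv (deriv u)) x) / 2 +
        deriv (fun y => v y * (w y + v y + u y) / 3) x = 0) :
    (∫ x in (0:ℝ)..L,
        ((1 / 4) * ((deriv v x) ^ 2 + (deriv w x) ^ 2) -
          (1 / 6) * ((v x) ^ 2 * w x + (w x) ^ 2 * v x))) =
      ∫ x in (0:ℝ)..L,
        ((1 / 4) * ((deriv u x) ^ 2 + (deriv v x) ^ 2) -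
          (1 / 6) * ((u x) ^ 2 * v x + (v x) ^ 2 * u x)) := by
  have cd : ∀ f : ℝ → ℝ, ContDiff ℝ (⊤ : ℕ∞) f → ContDiff ℝ (⊤ : ℕ∞) (deriv f) :=
    fun f hf => (contDiff_infty_iff_deriv.1 hf).2
  have hd : ∀ f : ℝ → ℝ, ContDiff ℝ (⊤ : ℕ∞) f → ∀ x, HasDerivAt f (deriv f x) x :=
    fun f hf x => ((contDiff_infty_iff_deriv.1 hf).1 x).hasDerivAt
  have hp : ∀ f : ℝ → ℝ, Function.Periodic f L → Function.Periodic (deriv f) L := by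
    intro f hf x
    have h : (fun y => f (y + L)) = f := funext hf
    rw [← deriv_comp_add_const, h]
  have hu1 := cd u hu
  have hv1 := cd v hv
  have hw1 := cd w hw
  have hu2 := cd _ hu1
  have hw2 := cd _ hw1
  have cu := hu.continuous
  have cv := hv.continuous
  have cw := hw.continuous
  have cu1 := hu1.continuous
  have cv1 := hv1.continuous
  have cw1 := hw1.continuous
  -- the difference of the two densities is the derivative of a periodic function
  have key : ∀ x, HasDerivAt (fun x => (1 / 4) * ((w x - u x) * (deriv w x + deriv u x)) +
      Δt / 2 * ((deriv (deriv w) x + deriv (deriv u) x) / 2 +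
        v x * (w x + v x + u x) / 3) ^ 2)
      (((1 / 4) * ((deriv v x) ^ 2 + (deriv w x) ^ 2) -
          (1 / 6) * ((v x) ^ 2 * w x + (w x) ^ 2 * v x)) -
        ((1 / 4) * ((deriv u x) ^ 2 + (deriv v x) ^ 2) -
          (1 / 6) * ((u x) ^ 2 * v x + (v x) ^ 2 * u x))) x := by
    intro x
    have hN : HasDerivAt (fun y => v y * (w y + v y + u y) / 3)
        (deriv (fun y => v y * (w y + v y + u y) / 3) x) x :=
      hd _ ((hv.mul ((hw.add hv).add hu)).div_const 3) x
    have hG := (((hd _ hw2 x).add (hd _ hu2 x)).div_const 2).add hN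
    have hA := ((hd _ hw x).sub (hd _ hu x)).mul ((hd _ hw1 x).add (hd _ hu1 x))
    have hF := (hA.const_mul (1 / 4)).add ((hG.pow 2).const_mul (Δt / 2))
    refine hF.congr_deriv ?_
    have hs := hscheme x
    have hs' : (deriv (deriv (deriv w)) x + deriv (deriv (deriv u)) x) / 2 +
        deriv (fun y => v y * (w y + v y + u y) / 3) x = -((w x - u x) / (2 * Δt)) := by
      linarith
    rw [hs']
    simp only [Pi.add_apply, Pi.sub_apply]
    field_simp
    ring
  rw [← sub_eq_zero, ← intervalIntegral.integral_sub
    (Continuous.intervalIntegrable (by fun_prop) _ _)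
    (Continuous.intervalIntegrable (by fun_prop) _ _),
    intervalIntegral.integral_eq_sub_of_hasDerivAt (fun x _ => key x)
    (Continuous.intervalIntegrable (by fun_prop) _ _)]
  have e : ∀ f : ℝ → ℝ, Function.Periodic f L → f L = f 0 := fun f hf => by
    simpa using hf 0
  simp only [e u hup, e v hvp, e w hwp, e _ (hp u hup), e _ (hp w hwp),
    e _ (hp _ (hp u hup)), e _ (hp _ (hp w hwp)), sub_self]
end
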